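/- arXiv:2108.12487 — 2 statements merged into one kernel-verified Lean document; each statement's English description precedes it below -/
import Mathlib

section
/- Let x : ℕ → ℝ be a sequence of positive real numbers, let s_n = x_0 + ⋯ + x_n with s_{−1} = 0, and let g_n ∈ SL(2,ℝ) be the matrix [[(s_{n−1}+s_n)/(s_n−s_{n−1}), −2·s_{n−1}·s_n/(s_n−s_{n−1})], [−2/(s_n−s_{n−1}), (s_{n−1}+s_n)/(s_n−s_{n−1})]], acting on ℂ by Möbius transformations. Then for every n ∈ ℕ: g_n sends s_{n−1} to −s_{n−1} and s_n to −s_n; moreover, for every z ∈ ℂ with Im z > 0 and |z − (s_{n−1}+s_n)/2| = (s_n−s_{n−1})/2, the image w = g_n·z satisfies Im w > 0 and |w + (s_{n−1}+s_n)/2| = (s_n−s_{n−1})/2. That is, g_n maps the half-circle γ_n^+ with endpoints s_{n−1} and s_n onto the half-circle γ_n^− with endpoints −s_n and −s_{n−1}. -/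
/-- Partial sums of `x`: `sPartial x n = x 0 + ⋯ + x (n-1)`.  Thus
`sPartial x 0 = 0` realizes the convention `s_{-1} = 0`, and for `n ∈ ℕ`,
`s_n = sPartial x (n+1)` and `s_{n-1} = sPartial x n`. -/
noncomputable def sPartial (x : ℕ → ℝ) (n : ℕ) : ℝ := ∑ i ∈ Finset.range n, x i

/-- The matrix `g_n` of the paper, where `s_{n-1} = sPartial x n` and
`s_n = sPartial x (n+1)`:
`[[(s_{n−1}+s_n)/(s_n−s_{n−1}), −2·s_{n−1}·s_n/(s_n−s_{n−1})],
  [−2/(s_n−s_{n−1}), (s_{n−1}+s_n)/(s_n−s_{n−1})]]`. -/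
noncomputable def gMat (x : ℕ → ℝ) (n : ℕ) : Matrix (Fin 2) (Fin 2) ℝ :=
  !![(sPartial x n + sPartial x (n + 1)) / (sPartial x (n + 1) - sPartial x n),
      -2 * sPartial x n * sPartial x (n + 1) / (sPartial x (n + 1) - sPartial x n);
      -2 / (sPartial x (n + 1) - sPartial x n),
      (sPartial x n + sPartial x (n + 1)) / (sPartial x (n + 1) - sPartial x n)]

/-- The Möbius transformation of `ℂ` associated to a real 2×2 matrix
`[[α,β],[γ,δ]]`: `z ↦ (αz+β)/(γz+δ)`. -/
noncomputable def moebius (M : Matrix (Fin 2) (Fin 2) ℝ) (z : ℂ) : ℂ :=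
  ((M 0 0 : ℂ) * z + (M 0 1 : ℂ)) / ((M 1 0 : ℂ) * z + (M 1 1 : ℂ))

theorem moebius_gMat_eq (x : ℕ → ℝ) (n : ℕ) (h : sPartial x n < sPartial x (n + 1)) (z : ℂ)
    (hz : z - (((sPartial x n + sPartial x (n + 1)) / 2 : ℝ) : ℂ) ≠ 0) :
    moebius (gMat x n) z = -(((sPartial x n + sPartial x (n + 1)) / 2 : ℝ) : ℂ) -
      ((((sPartial x (n + 1) - sPartial x n) / 2) ^ 2 : ℝ) : ℂ) /
        (z - (((sPartial x n + sPartial x (n + 1)) / 2 : ℝ) : ℂ)) := by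
  simp only [moebius, gMat, Matrix.of_apply, Matrix.cons_val', Matrix.cons_val_zero,
    Matrix.cons_val_one, Matrix.cons_val_fin_one]
  generalize sPartial x n = a at *
  generalize sPartial x (n + 1) = b at *
  have hd : (b : ℂ) - a ≠ 0 := by
    rw [sub_ne_zero]
    exact_mod_cast h.ne'
  obtain ⟨u, rfl⟩ : ∃ u : ℂ, z = u + (((a + b) / 2 : ℝ) : ℂ) :=
    ⟨z - (((a + b) / 2 : ℝ) : ℂ), by ring⟩
  rw [add_sub_cancel_right] at hz ⊢
  push_cast
  have e : (-2 / ((b : ℂ) - a)) * (u + (a + b) / 2) + (a + b) / (b - a) = -2 * u / (b - a) := by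
    field_simp
    ring
  rw [e]
  field_simp
  ring

/-- `g_n` sends `s_{n−1}` to `−s_{n−1}` and `s_n` to `−s_n`, and maps
the half-circle `γ_n^+` with endpoints `s_{n−1}, s_n` onto the half-circle `γ_n^−`
with endpoints `−s_n, −s_{n−1}`. -/
theorem stmt6 (x : ℕ → ℝ) (hx : ∀ n, 0 < x n) :
    ∀ n : ℕ,
      moebius (gMat x n) ((sPartial x n : ℝ) : ℂ) = -((sPartial x n : ℝ) : ℂ) ∧
      moebius (gMat x n) ((sPartial x (n + 1) : ℝ) : ℂ) = -((sPartial x (n + 1) : ℝ) : ℂ) ∧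
      ∀ z : ℂ, 0 < z.im →
        ‖z - (((sPartial x n + sPartial x (n + 1)) / 2 : ℝ) : ℂ)‖ =
          (sPartial x (n + 1) - sPartial x n) / 2 →
        0 < (moebius (gMat x n) z).im ∧
        ‖moebius (gMat x n) z + (((sPartial x n + sPartial x (n + 1)) / 2 : ℝ) : ℂ)‖ =
          (sPartial x (n + 1) - sPartial x n) / 2 := by
  intro n
  have h : sPartial x n < sPartial x (n + 1) := by
    simp only [sPartial, Finset.sum_range_succ]
    linarith [hx n]
  have key := moebius_gMat_eq x n h
  generalize moebius (gMat x n) = f at *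
  generalize sPartial x n = a at *
  generalize sPartial x (n + 1) = b at *
  have hd : (b : ℂ) - a ≠ 0 := by
    rw [sub_ne_zero]
    exact_mod_cast h.ne'
  have hd' : (a : ℂ) - b ≠ 0 := by
    rw [sub_ne_zero]
    exact_mod_cast h.ne
  refine ⟨?_, ?_, ?_⟩
  · have e : (a : ℂ) - (((a + b) / 2 : ℝ) : ℂ) = (a - b) / 2 := by
      push_cast
      ring
    rw [key _ (by rw [e]; exact div_ne_zero hd' two_ne_zero), e]
    push_cast
    field_simp
    ring
  · have e : (b : ℂ) - (((a + b) / 2 : ℝ) : ℂ) = (b - a) / 2 := by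
      push_cast
      ring
    rw [key _ (by rw [e]; exact div_ne_zero hd two_ne_zero), e]
    push_cast
    field_simp
    ring
  · intro z hz hn
    have hr : 0 < (b - a) / 2 := by linarith
    have hu : z - (((a + b) / 2 : ℝ) : ℂ) ≠ 0 := by
      rw [← norm_pos_iff, hn]
      exact hr
    have him : (z - (((a + b) / 2 : ℝ) : ℂ)).im = z.im := by
      rw [Complex.sub_im, Complex.ofReal_im, sub_zero]
    rw [key z hu]
    generalize z - (((a + b) / 2 : ℝ) : ℂ) = u at *
    generalize (b - a) / 2 = r at *
    constructor
    · have hN : 0 < Complex.normSq u := Complex.normSq_pos.mpr hu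
      rw [div_eq_mul_inv _ u, Complex.sub_im, Complex.neg_im, Complex.ofReal_im,
        Complex.im_ofReal_mul, Complex.inv_im, him]
      have : 0 < r ^ 2 * (z.im / Complex.normSq u) := by positivity
      have e : r ^ 2 * (-z.im / Complex.normSq u) = -(r ^ 2 * (z.im / Complex.normSq u)) := by ring
      rw [e]
      linarith
    · rw [show ∀ c d : ℂ, -c - d + c = -d from fun c d => by ring, norm_neg, norm_div, hn,
        Complex.norm_real, Real.norm_of_nonneg (by positivity)]
      field_simp
end

section
/- Let x : ℕ → ℝ be a sequence of positive real numbers, let s_n = x_0 + ⋯ + x_n with s_{−1} = 0, let g_n ∈ SL(2,ℝ) be the matrix [[(s_{n−1}+s_n)/(s_n−s_{n−1}), −2·s_{n−1}·s_n/(s_n−s_{n−1})], [−2/(s_n−s_{n−1}), (s_{n−1}+s_n)/(s_n−s_{n−1})]], and let Γ_x be the subgroup of SL(2,ℝ) generated by {g_n : n ∈ ℕ}. Define D = {z ∈ ℍ : for all n ∈ ℕ, |z − (s_{n−1}+s_n)/2| > (s_n−s_{n−1})/2 and |z + (s_{n−1}+s_n)/2| > (s_n−s_{n−1})/2}. Then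 D is a fundamental domain for the action of Γ_x on ℍ with respect to the hyperbolic area measure: the translates γ·D for γ ∈ Γ_x (taken modulo ±I) are pairwise disjoint, and the complement of their union ⋃_{γ∈Γ_x} γ·D in ℍ has hyperbolic area zero. -/
namespace FD

open UpperHalfPlane Filter Topology MeasureTheory

section
variable (x : ℕ → ℝ)

/-- radius -/
noncomputable def rad (j : ℕ × Bool) : ℝ := (sPartial x (j.1 + 1) - sPartial x j.1) / 2

/-- center -/
noncomputable def mid (n : ℕ) : ℝ := (sPartial x n + sPartial x (n + 1)) / 2

/-- signed center -/
noncomputable def cen (j : ℕ × Bool) : ℝ := cond j.2 (mid x j.1) (-mid x j.1)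

/-- distance to center -/
noncomputable def dd (j : ℕ × Bool) (z : ℍ) : ℝ := ‖(z : ℂ) - (cen x j : ℂ)‖

lemma sPartial_succ (n : ℕ) : sPartial x (n + 1) = sPartial x n + x n := by
  simp [sPartial, Finset.sum_range_succ]

variable {x}

lemma sPartial_mono (hx : ∀ n, 0 < x n) : Monotone (sPartial x) :=
  monotone_nat_of_le_succ fun n => by rw [sPartial_succ]; linarith [hx n]

lemma sPartial_nonneg (hx : ∀ n, 0 < x n) (n : ℕ) : 0 ≤ sPartial x n :=
  Finset.sum_nonneg fun i _ => (hx i).le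

lemma rad_pos (hx : ∀ n, 0 < x n) (j : ℕ × Bool) : 0 < rad x j := by
  rw [rad, sPartial_succ]; linarith [hx j.1]

lemma rad_le_abs (hx : ∀ n, 0 < x n) (j : ℕ × Bool) : (rad x j) ^ 2 ≤ (cen x j) ^ 2 := by
  have h0 := sPartial_nonneg hx j.1
  have h1 := sPartial_nonneg hx (j.1 + 1)
  have : (cen x j) ^ 2 = (mid x j.1) ^ 2 := by
    rcases j with ⟨n, _ | _⟩ <;> simp [cen]
  rw [this, rad, mid]
  nlinarith [mul_nonneg h0 h1]

lemma det_gMat (hx : ∀ n, 0 < x n) (n : ℕ) : (gMat x n).det = 1 := by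
  have := hx n
  have e : sPartial x n + x n - sPartial x n = x n := by ring
  rw [gMat, Matrix.det_fin_two_of, sPartial_succ, e]
  field_simp
  ring

/-- the generator -/
noncomputable def gSL (hx : ∀ n, 0 < x n) (n : ℕ) : Matrix.SpecialLinearGroup (Fin 2) ℝ := ⟨gMat x n, det_gMat hx n⟩

/-- letters -/
noncomputable def hh (hx : ∀ n, 0 < x n) (j : ℕ × Bool) : Matrix.SpecialLinearGroup (Fin 2) ℝ :=
  cond j.2 (gSL hx j.1) (gSL hx j.1)⁻¹

lemma sub_ne (z : ℍ) (c : ℝ) : (z : ℂ) - c ≠ 0 := by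
  intro h
  have := congrArg Complex.im h
  simp at this
  exact z.im_pos.ne' this

lemma gMat_eq (hx : ∀ n, 0 < x n) (n : ℕ) : gMat x n =
    !![mid x n / rad x (n, true), -(mid x n ^ 2 - rad x (n, true) ^ 2) / rad x (n, true);
      -1 / rad x (n, true), mid x n / rad x (n, true)] := by
  have := hx n
  have hr : rad x (n, true) = x n / 2 := by rw [rad, sPartial_succ]; ring
  have e : sPartial x n + x n - sPartial x n = x n := by ring
  rw [gMat, hr, mid, sPartial_succ, e]
  congr 1
  ext i k
  fin_cases i <;> fin_cases k <;> simp <;> (field_simp; try ring)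

lemma gen_aux (z m r : ℂ) (hr : r ≠ 0) (h : z - m ≠ 0) :
    (m / r * z + -(m ^ 2 - r ^ 2) / r) / (-1 / r * z + m / r) = - m - r ^ 2 / (z - m) := by
  have e1 : -1 / r * z + m / r = -(z - m) / r := by field_simp; ring
  rw [e1]
  field_simp
  ring

lemma coe_hh (hx : ∀ n, 0 < x n) (j : ℕ × Bool) (z : ℍ) :
    ((hh hx j • z : ℍ) : ℂ) = -(cen x j : ℂ) - (rad x j : ℂ) ^ 2 / ((z : ℂ) - cen x j) := by
  rcases j with ⟨n, b⟩
  have hz := sub_ne z (cen x (n, b))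
  have hn : (rad x (n, b) : ℂ) ≠ 0 := by exact_mod_cast (rad_pos hx (n, b)).ne'
  rw [UpperHalfPlane.coe_specialLinearGroup_apply]
  have hr : rad x (n, true) = rad x (n, b) := rfl
  have hg := gMat_eq hx n
  rw [hr] at hg
  rw [← gen_aux z (cen x (n, b)) (rad x (n, b)) hn hz]
  rcases b with _ | _
  · have e : (hh hx (n, false) : Matrix (Fin 2) (Fin 2) ℝ) = (gMat x n).adjugate := rfl
    rw [e, hg, Matrix.adjugate_fin_two_of]
    simp [cen]
    rw [← neg_div_neg_eq]
    congr 1 <;> ring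
  · have e : (hh hx (n, true) : Matrix (Fin 2) (Fin 2) ℝ) = gMat x n := rfl
    rw [e, hg]
    simp [cen]

/-- opposite letter -/
def op (j : ℕ × Bool) : ℕ × Bool := (j.1, !j.2)

lemma cen_op (j : ℕ × Bool) : cen x (op j) = -cen x j := by
  rcases j with ⟨n, _ | _⟩ <;> simp [cen, op]

lemma dd_pos (j : ℕ × Bool) (z : ℍ) : 0 < dd x j z := norm_pos_iff.2 (sub_ne _ _)

lemma dd_hh (hx : ∀ n, 0 < x n) (j : ℕ × Bool) (z : ℍ) : dd x (op j) (hh hx j • z) * dd x j z = rad x j ^ 2 := by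
  rw [dd, dd, coe_hh, cen_op, ← norm_mul]
  have hz := sub_ne z (cen x j)
  have : (-(cen x j : ℂ) - (rad x j : ℂ) ^ 2 / ((z : ℂ) - cen x j) - ((-cen x j : ℝ) : ℂ))
    * ((z : ℂ) - cen x j) = ((-(rad x j ^ 2) : ℝ) : ℂ) := by
    push_cast; field_simp; ring
  rw [this, Complex.norm_real, norm_neg, Real.norm_of_nonneg (by positivity)]

lemma dd_sq (j : ℕ × Bool) (z : ℍ) : dd x j z ^ 2 = (z.re - cen x j) ^ 2 + z.im ^ 2 := by
  rw [dd, Complex.sq_norm, Complex.normSq_apply]; simp; ring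

lemma rad_op (j : ℕ × Bool) : rad x (op j) = rad x j := rfl

lemma hh_lt (hx : ∀ n, 0 < x n) {j : ℕ × Bool} {z : ℍ} (h : rad x j < dd x j z) :
    dd x (op j) (hh hx j • z) < rad x j := by
  have := dd_hh hx j z
  have := rad_pos hx j
  have := dd_pos (x := x) (op j) (hh hx j • z)
  by_contra! hc
  nlinarith

lemma hh_gt (hx : ∀ n, 0 < x n) {j : ℕ × Bool} {z : ℍ} (h : dd x j z < rad x j) :
    rad x j < dd x (op j) (hh hx j • z) := by
  have := dd_hh hx j z
  have := rad_pos hx j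
  have := dd_pos (x := x) j z
  by_contra! hc
  nlinarith

lemma hh_eq (hx : ∀ n, 0 < x n) {j : ℕ × Bool} {z : ℍ} (h : dd x j z = rad x j) :
    dd x (op j) (hh hx j • z) = rad x j := by
  have := dd_hh hx j z
  have := rad_pos hx j
  rw [h] at *
  nlinarith

lemma cen_sub (hx : ∀ n, 0 < x n) {j k : ℕ × Bool} (hjk : j ≠ k) : rad x j + rad x k ≤ |cen x j - cen x k| := by
  have key : ∀ n m : ℕ, n < m →
      rad x (n, true) + rad x (m, true) ≤ mid x m - mid x n := by
    intro n m hnm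
    have := sPartial_mono hx (show n + 1 ≤ m from hnm)
    simp only [rad, mid]; linarith
  have key2 : ∀ n m : ℕ, rad x (n, true) + rad x (m, true) ≤ mid x m + mid x n := by
    intro n m
    have := sPartial_nonneg hx n
    have := sPartial_nonneg hx m
    simp only [rad, mid]; linarith
  have hr : ∀ n b, rad x (n, b) = rad x (n, true) := fun _ _ => rfl
  rcases j with ⟨n, b⟩
  rcases k with ⟨m, b'⟩
  rw [hr n b, hr m b']
  by_cases hb : b = b'
  · subst hb
    have hnm : n ≠ m := by rintro rfl; exact hjk rfl
    rcases lt_or_gt_of_ne hnm with h | h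
    · have := key n m h
      rcases b with _ | _ <;> simp only [cen, cond_true, cond_false] <;> rw [le_abs] <;>
        first | (left; linarith) | (right; linarith)
    · have := key m n h
      rcases b with _ | _ <;> simp only [cen, cond_true, cond_false] <;> rw [le_abs] <;>
        first | (left; linarith) | (right; linarith)
  · have := key2 n m
    rcases b with _ | _ <;> rcases b' with _ | _ <;> simp at hb <;>
      simp only [cen, cond_true, cond_false] <;> rw [le_abs] <;>
        first | (left; linarith) | (right; linarith)

/-- closed half-discs in the upper half plane are disjoint -/
lemma disc_unique (hx : ∀ n, 0 < x n) {j k : ℕ × Bool} {z : ℍ} (hj : dd x j z ≤ rad x j) (hk : dd x k z ≤ rad x k) :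
    j = k := by
  by_contra hjk
  have h := cen_sub hx hjk
  have hv := z.im_pos
  have aux : ∀ i : ℕ × Bool, dd x i z ≤ rad x i → |z.re - cen x i| < rad x i := by
    intro i hi
    have := dd_sq (x := x) i z
    have := dd_pos (x := x) i z
    apply abs_lt_of_sq_lt_sq _ (rad_pos hx i).le
    nlinarith
  have h1 := aux j hj
  have h2 := aux k hk
  have := abs_sub_le (cen x j) z.re (cen x k)
  rw [abs_sub_comm (cen x j) z.re] at this
  linarith

/-- ping-pong -/
lemma word_disc (hx : ∀ n, 0 < x n) (z : ℍ) (hz : ∀ j, rad x j < dd x j z) (L : List (ℕ × Bool)) :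
    ∀ j, FreeGroup.IsReduced (j :: L) →
      dd x (op j) (((j :: L).map (hh hx)).prod • z) < rad x j := by
  induction L with
  | nil => intro j _; simpa using hh_lt hx (hz j)
  | cons k L ih =>
    intro j hj
    rw [FreeGroup.isReduced_cons_cons] at hj
    have h1 := ih k hj.2
    rw [List.map_cons, List.prod_cons, mul_smul]
    apply hh_lt
    by_contra! hc
    have := disc_unique hx (j := op k) (k := j) h1.le hc
    subst this
    simp [op] at hj

lemma free_part (hx : ∀ n, 0 < x n) (z : ℍ) (hz : ∀ j, rad x j < dd x j z) (w : FreeGroup ℕ)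
    (hz' : ∀ j, rad x j < dd x j (FreeGroup.lift (gSL hx) w • z)) : w = 1 := by
  have e : FreeGroup.lift (gSL hx) w = (w.toWord.map (hh hx)).prod := by
    conv_lhs => rw [← FreeGroup.mk_toWord (x := w)]
    rw [FreeGroup.lift_mk]; rfl
  rw [← FreeGroup.toWord_eq_nil_iff]
  have hred := FreeGroup.isReduced_toWord (x := w)
  rw [e] at hz'
  cases hL : w.toWord with
  | nil => rfl
  | cons j L =>
    rw [hL] at hz' hred
    have := word_disc hx z hz L j hred
    have := hz' (op j)
    rw [rad_op] at this
    linarith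

/-- local finiteness -/
lemma loc_fin (hx : ∀ n, 0 < x n) (r R : ℝ) (hr : 0 < r) : ∃ N : ℕ, ∀ n ≥ N, sPartial x n < R → x n < r := by
  rcases tendsto_atTop_of_monotone (sPartial_mono hx) with h | ⟨l, h⟩
  · obtain ⟨N, hN⟩ := eventually_atTop.1 (h.eventually_ge_atTop R)
    exact ⟨N, fun n hn hlt => absurd (hN n hn) (not_le.2 hlt)⟩
  · have h2 : Tendsto x atTop (𝓝 0) := by
      have := (h.comp (tendsto_add_atTop_nat 1)).sub h
      simpa [Function.comp_def, sPartial_succ] using this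
    obtain ⟨N, hN⟩ := eventually_atTop.1 (h2.eventually (gt_mem_nhds hr))
    exact ⟨N, fun n hn _ => hN n hn⟩

lemma continuous_dd (j : ℕ × Bool) : Continuous (dd x j) := by
  unfold dd; fun_prop

lemma loc_disc (hx : ∀ n, 0 < x n) (z0 : ℍ) : ∀ᶠ w in 𝓝 z0, ∀ j, dd x j w < rad x j → dd x j z0 ≤ rad x j := by
  obtain ⟨N, hN⟩ := loc_fin hx z0.im (‖(z0 : ℂ)‖ + 1) z0.im_pos
  have h1 : ∀ᶠ w : ℍ in 𝓝 z0, z0.im / 2 < w.im :=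
    UpperHalfPlane.continuous_im.continuousAt.eventually (lt_mem_nhds (by linarith [z0.im_pos]))
  have h2 : ∀ᶠ w : ℍ in 𝓝 z0, ‖(w : ℂ)‖ < ‖(z0 : ℂ)‖ + 1 :=
    (UpperHalfPlane.continuous_coe.norm).continuousAt.eventually (gt_mem_nhds (by linarith))
  have h3 : ∀ᶠ w : ℍ in 𝓝 z0, ∀ j ∈ (Finset.range N ×ˢ (Finset.univ : Finset Bool)),
      dd x j w < rad x j → dd x j z0 ≤ rad x j := by
    rw [eventually_all_finset]
    intro j _
    by_cases hj : dd x j z0 ≤ rad x j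
    · exact Eventually.of_forall fun _ _ => hj
    · push Not at hj
      filter_upwards [(continuous_dd (x := x) j).continuousAt.eventually (lt_mem_nhds hj)] with w hw
        h
      exact absurd h (not_lt.2 hw.le)
  filter_upwards [h1, h2, h3] with w h1 h2 h3 j hj
  by_cases hjN : j.1 < N
  · exact h3 j (by simp [hjN]) hj
  exfalso
  push Not at hjN
  have hs := dd_sq (x := x) j w
  have hp := dd_pos (x := x) j w
  have hrad : rad x j = x j.1 / 2 := by rw [rad, sPartial_succ]; ring
  have him := w.im_pos
  have hlt : w.im < rad x j := by
    have : w.im ≤ dd x j w := by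
      by_contra! hcon
      nlinarith [sq_nonneg (w.re - cen x j)]
    linarith
  have hsN : sPartial x j.1 < ‖(z0 : ℂ)‖ + 1 := by
    have hc : |cen x j| = sPartial x j.1 + rad x j := by
      have h0 := sPartial_nonneg hx j.1
      have h1 := sPartial_nonneg hx (j.1 + 1)
      have : |cen x j| = |mid x j.1| := by
        rcases j with ⟨n, _ | _⟩ <;> simp [cen]
      rw [this, abs_of_nonneg (by rw [mid]; linarith), mid, rad]; ring
    have : ‖(cen x j : ℂ)‖ ≤ ‖(w : ℂ)‖ + dd x j w := by
      have := norm_sub_le (w : ℂ) ((w : ℂ) - cen x j)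
      simpa [dd] using this
    rw [Complex.norm_real, Real.norm_eq_abs, hc] at this
    linarith
  have := hN j.1 hjN hsN
  linarith

/-- the height function -/
noncomputable def ff (z : ℍ) : ℝ := (z.re ^ 2 + z.im ^ 2 + 1) / z.im

lemma ff_hh (hx : ∀ n, 0 < x n) (j : ℕ × Bool) (z : ℍ) : ff (hh hx j • z) = ff z +
    (1 + cen x j ^ 2 - rad x j ^ 2) * (dd x j z ^ 2 - rad x j ^ 2) / (rad x j ^ 2 * z.im) := by
  have hc := coe_hh hx j z
  have hd := dd_sq (x := x) j z
  have hp := dd_pos (x := x) j z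
  have hr := rad_pos hx j
  have hi := z.im_pos
  have hN : Complex.normSq ((z : ℂ) - cen x j) = dd x j z ^ 2 := by
    rw [dd, Complex.sq_norm]
  have hre : (hh hx j • z).re = -cen x j - rad x j ^ 2 * (z.re - cen x j) / dd x j z ^ 2 := by
    have := congrArg Complex.re hc
    rw [← Complex.ofReal_pow, Complex.sub_re, Complex.div_re, hN, Complex.ofReal_re, Complex.ofReal_im] at this
    simpa using this
  have him : (hh hx j • z).im = rad x j ^ 2 * z.im / dd x j z ^ 2 := by
    have := congrArg Complex.im hc
    rw [← Complex.ofReal_pow, Complex.sub_im, Complex.div_im, hN, Complex.ofReal_re, Complex.ofReal_im] at this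
    simpa using this
  rw [ff, ff, hre, him]
  generalize dd x j z = d at *
  generalize rad x j = r at *
  generalize cen x j = c at *
  generalize z.re = u at *
  generalize z.im = v at *
  have hv : v ^ 2 = d ^ 2 - (u - c) ^ 2 := by linarith
  field_simp
  ring_nf
  ring_nf at hv
  simp only [hv]
  ring

lemma hh_mem (hx : ∀ n, 0 < x n) (j : ℕ × Bool) {Γ : Subgroup (Matrix.SpecialLinearGroup (Fin 2) ℝ)}
    (hΓ : ∀ n, gSL hx n ∈ Γ) : hh hx j ∈ Γ := by
  rcases j with ⟨n, _ | _⟩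
  · exact Γ.inv_mem (hΓ n)
  · exact hΓ n

lemma local_step (hx : ∀ n, 0 < x n) {Γ : Subgroup (Matrix.SpecialLinearGroup (Fin 2) ℝ)}
    (hΓ : ∀ n, gSL hx n ∈ Γ) (z0 : ℍ) : ∃ δ > 0, ∀ᶠ w in 𝓝 z0,
      (∃ γ ∈ Γ, ∀ j, rad x j ≤ dd x j (γ • w)) ∨ ∃ γ ∈ Γ, ff (γ • w) ≤ ff w - δ := by
  by_cases h0 : ∃ j, dd x j z0 < rad x j
  · obtain ⟨j, hj⟩ := h0
    set G : ℍ → ℝ := fun w =>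
      (1 + cen x j ^ 2 - rad x j ^ 2) * (dd x j w ^ 2 - rad x j ^ 2) / (rad x j ^ 2 * w.im) with hG
    have hr := rad_pos hx j
    have hrc := rad_le_abs hx j
    have hGc : Continuous G := by
      have h1 := continuous_dd (x := x) j
      have h2 := UpperHalfPlane.continuous_im
      refine Continuous.div (by fun_prop) (by fun_prop) fun w => ?_
      have := w.im_pos
      positivity
    have hGneg : G z0 < 0 := by
      have := z0.im_pos
      have := dd_pos (x := x) j z0
      refine div_neg_of_neg_of_pos (mul_neg_of_pos_of_neg (by linarith) ?_) (by positivity)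
      nlinarith
    refine ⟨-(G z0) / 2, by linarith, ?_⟩
    filter_upwards [hGc.continuousAt.eventually (gt_mem_nhds (show G z0 < G z0 / 2 by linarith))]
      with w hw
    right
    refine ⟨hh hx j, hh_mem hx j hΓ, ?_⟩
    rw [ff_hh hx j w]
    simp only [hG] at hw ⊢
    linarith
  · push Not at h0
    refine ⟨1, one_pos, ?_⟩
    by_cases h1 : ∃ j, dd x j z0 = rad x j
    · obtain ⟨j, hj⟩ := h1
      have hz1 := hh_eq hx hj
      have hcont : Tendsto (fun w : ℍ => hh hx j • w) (𝓝 z0) (𝓝 (hh hx j • z0)) :=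
        (continuous_const_smul _).tendsto _
      filter_upwards [loc_disc hx z0, hcont.eventually (loc_disc hx (hh hx j • z0))] with w hw hw'
      left
      by_cases hwj : dd x j w < rad x j
      · refine ⟨hh hx j, hh_mem hx j hΓ, fun k => ?_⟩
        by_contra! hk
        have := hw' k hk
        have e := disc_unique hx (j := op j) (k := k) hz1.le this
        subst e
        have := hh_gt hx hwj
        rw [rad_op] at hk
        linarith
      · refine ⟨1, Γ.one_mem, fun k => ?_⟩
        rw [one_smul]
        by_contra! hk
        have e := disc_unique hx hj.le (hw k hk)
        subst e
        exact hwj hk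
    · push Not at h1
      filter_upwards [loc_disc hx z0] with w hw
      left
      refine ⟨1, Γ.one_mem, fun k => ?_⟩
      rw [one_smul]
      by_contra! hk
      exact h1 k (le_antisymm (hw k hk) (h0 k))

lemma ff_eq (z : ℍ) : ff z = 2 * Real.cosh (dist z UpperHalfPlane.I) := by
  rw [UpperHalfPlane.cosh_dist', ff]
  have := z.im_pos
  simp
  field_simp

lemma cover (hx : ∀ n, 0 < x n) {Γ : Subgroup (Matrix.SpecialLinearGroup (Fin 2) ℝ)}
    (hΓ : ∀ n, gSL hx n ∈ Γ) (z : ℍ) : ∃ γ ∈ Γ, ∀ j, rad x j ≤ dd x j (γ • z) := by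
  have hK : IsCompact (Metric.closedBall UpperHalfPlane.I (dist z UpperHalfPlane.I)) :=
    isCompact_closedBall _ _
  have hmem : ∀ w, ff w ≤ ff z →
      w ∈ Metric.closedBall UpperHalfPlane.I (dist z UpperHalfPlane.I) := by
    intro w hw
    rw [ff_eq, ff_eq] at hw
    rw [Metric.mem_closedBall]
    have : Real.cosh (dist w UpperHalfPlane.I) ≤ Real.cosh (dist z UpperHalfPlane.I) := by linarith
    rwa [Real.cosh_le_cosh, abs_of_nonneg dist_nonneg, abs_of_nonneg dist_nonneg] at this
  obtain ⟨δ, hδ, H⟩ : ∃ δ > 0,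
      ∀ w ∈ Metric.closedBall UpperHalfPlane.I (dist z UpperHalfPlane.I),
      (∃ γ ∈ Γ, ∀ j, rad x j ≤ dd x j (γ • w)) ∨ ∃ γ ∈ Γ, ff (γ • w) ≤ ff w - δ := by
    refine hK.induction_on (p := fun s => ∃ δ > 0, ∀ w ∈ s,
      (∃ γ ∈ Γ, ∀ j, rad x j ≤ dd x j (γ • w)) ∨ ∃ γ ∈ Γ, ff (γ • w) ≤ ff w - δ) ?_ ?_ ?_ ?_
    · exact ⟨1, one_pos, by simp⟩
    · rintro s t hst ⟨δ, hδ, H⟩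
      exact ⟨δ, hδ, fun w hw => H w (hst hw)⟩
    · rintro s t ⟨δ, hδ, H⟩ ⟨δ', hδ', H'⟩
      refine ⟨min δ δ', lt_min hδ hδ', ?_⟩
      rintro w (hw | hw)
      · rcases H w hw with h | ⟨γ, hγ, h⟩
        · exact Or.inl h
        · exact Or.inr ⟨γ, hγ, h.trans (by linarith [min_le_left δ δ'])⟩
      · rcases H' w hw with h | ⟨γ, hγ, h⟩
        · exact Or.inl h
        · exact Or.inr ⟨γ, hγ, h.trans (by linarith [min_le_right δ δ'])⟩
    · intro w _
      obtain ⟨δ, hδ, h⟩ := local_step hx hΓ w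
      exact ⟨_, mem_nhdsWithin_of_mem_nhds h, δ, hδ, fun w hw => hw⟩
  have main : ∀ N : ℕ, ∀ w, ff w ≤ ff z → ff w ≤ N * δ →
      ∃ γ ∈ Γ, ∀ j, rad x j ≤ dd x j (γ • w) := by
    intro N
    induction N with
    | zero =>
      intro w _ hw
      exfalso
      rw [ff_eq] at hw
      have := Real.cosh_pos (dist w UpperHalfPlane.I)
      simp at hw
      linarith
    | succ N ih =>
      intro w h1 h2
      rcases H w (hmem w h1) with h | ⟨γ, hγ, h⟩
      · exact h
      · push_cast at h2
        obtain ⟨γ', hγ', h'⟩ := ih (γ • w) (by linarith) (by linarith)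
        exact ⟨γ' * γ, Γ.mul_mem hγ' hγ, by simpa only [mul_smul] using h'⟩
  obtain ⟨N, hN⟩ := exists_nat_ge (ff z / δ)
  exact main N z le_rfl (by rwa [div_le_iff₀ hδ] at hN)

lemma moebius_coe (γ : Matrix.SpecialLinearGroup (Fin 2) ℝ) (z : ℍ) :
    moebius (γ : Matrix (Fin 2) (Fin 2) ℝ) (z : ℂ) = ((γ • z : ℍ) : ℂ) := by
  rw [UpperHalfPlane.coe_specialLinearGroup_apply]; rfl

lemma moebius_diff (γ : Matrix.SpecialLinearGroup (Fin 2) ℝ) :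
    DifferentiableOn ℝ (moebius (γ : Matrix (Fin 2) (Fin 2) ℝ)) {z : ℂ | 0 < z.im} := by
  intro z hz
  have hne : ((γ 1 0 : ℝ) : ℂ) * z + ((γ 1 1 : ℝ) : ℂ) ≠ 0 := by
    intro h
    have h1 := congrArg Complex.im h
    have h2 := congrArg Complex.re h
    simp at h1 h2
    have hz' : z.im ≠ 0 := ne_of_gt hz
    have h3 : γ 1 0 = 0 := by simpa [hz'] using h1
    have h4 : γ 1 1 = 0 := by simpa [h3] using h2
    have := γ.det_coe
    rw [Matrix.det_fin_two, h3, h4] at this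
    simp at this
  apply DifferentiableAt.differentiableWithinAt
  refine DifferentiableAt.restrictScalars ℝ (𝕜' := ℂ) ?_
  have h1 : DifferentiableAt ℂ (fun z : ℂ => ((γ 0 0 : ℝ) : ℂ) * z + ((γ 0 1 : ℝ) : ℂ)) z := by
    fun_prop
  have h2 : DifferentiableAt ℂ (fun z : ℂ => ((γ 1 0 : ℝ) : ℂ) * z + ((γ 1 1 : ℝ) : ℂ)) z := by
    fun_prop
  exact h1.div h2 hne

lemma mem_D_iff (z : ℍ) : (∀ j, rad x j < dd x j z) ↔ ∀ n : ℕ,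
      (sPartial x (n + 1) - sPartial x n) / 2 <
        ‖(z : ℂ) - (((sPartial x n + sPartial x (n + 1)) / 2 : ℝ) : ℂ)‖ ∧
      (sPartial x (n + 1) - sPartial x n) / 2 <
        ‖(z : ℂ) + (((sPartial x n + sPartial x (n + 1)) / 2 : ℝ) : ℂ)‖ := by
  have e : ∀ n, dd x (n, false) z = ‖(z : ℂ) + (mid x n : ℂ)‖ := by
    intro n; simp [dd, cen]
  constructor
  · intro h n
    refine ⟨h (n, true), ?_⟩
    have := h (n, false)
    rwa [e] at this
  · rintro h ⟨n, _ | _⟩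
    · rw [e]; exact (h n).2
    · exact (h n).1

end
end FD

open MeasureTheory
/-- the set `D` (the intersection of the exteriors of the
half-circles `γ_n^±`) is a fundamental domain for the action of `Γ_x` on the
upper half-plane with respect to the hyperbolic area measure `dx·dy/y²`: the
translates `γ·D`, `γ ∈ Γ_x` taken modulo `±I`, are pairwise disjoint, and the
complement in `ℍ` of their union has hyperbolic area zero. -/
theorem stmt10 (x : ℕ → ℝ) (hx : ∀ n, 0 < x n)
    (Γ : Subgroup (Matrix.SpecialLinearGroup (Fin 2) ℝ))
    (hΓ : Γ = Subgroup.closure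
      {g : Matrix.SpecialLinearGroup (Fin 2) ℝ |
        ∃ n : ℕ, (g : Matrix (Fin 2) (Fin 2) ℝ) = gMat x n})
    (D : Set ℂ)
    (hD : D = {z : ℂ | 0 < z.im ∧ ∀ n : ℕ,
      (sPartial x (n + 1) - sPartial x n) / 2 <
        ‖z - (((sPartial x n + sPartial x (n + 1)) / 2 : ℝ) : ℂ)‖ ∧
      (sPartial x (n + 1) - sPartial x n) / 2 <
        ‖z + (((sPartial x n + sPartial x (n + 1)) / 2 : ℝ) : ℂ)‖})
    (μ : MeasureTheory.Measure ℂ)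
    (hμ : μ = (MeasureTheory.volume.restrict {z : ℂ | 0 < z.im}).withDensity
      fun z => ENNReal.ofReal (1 / z.im ^ 2)) :
    (∀ γ₁ γ₂ : Matrix.SpecialLinearGroup (Fin 2) ℝ, γ₁ ∈ Γ → γ₂ ∈ Γ →
      (γ₁ : Matrix (Fin 2) (Fin 2) ℝ) ≠ (γ₂ : Matrix (Fin 2) (Fin 2) ℝ) →
      (γ₁ : Matrix (Fin 2) (Fin 2) ℝ) ≠ -(γ₂ : Matrix (Fin 2) (Fin 2) ℝ) →
      Disjoint (moebius (γ₁ : Matrix (Fin 2) (Fin 2) ℝ) '' D)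
        (moebius (γ₂ : Matrix (Fin 2) (Fin 2) ℝ) '' D)) ∧
    μ ({z : ℂ | 0 < z.im} \
      ⋃ γ ∈ Γ, moebius ((γ : Matrix.SpecialLinearGroup (Fin 2) ℝ) :
        Matrix (Fin 2) (Fin 2) ℝ) '' D) = 0 := by
  have hmemD : ∀ z : ℂ, z ∈ D ↔ ∃ w : UpperHalfPlane, (w : ℂ) = z ∧
      ∀ j, FD.rad x j < FD.dd x j w := by
    intro z
    rw [hD]
    constructor
    · rintro ⟨hz, h⟩
      exact ⟨⟨z, hz⟩, rfl, (FD.mem_D_iff ⟨z, hz⟩).2 h⟩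
    · rintro ⟨w, rfl, h⟩
      exact ⟨w.im_pos, (FD.mem_D_iff w).1 h⟩
  have hset : {g : Matrix.SpecialLinearGroup (Fin 2) ℝ |
        ∃ n : ℕ, (g : Matrix (Fin 2) (Fin 2) ℝ) = gMat x n} = Set.range (FD.gSL hx) := by
    ext g
    constructor
    · rintro ⟨n, hn⟩; exact ⟨n, Subtype.ext hn.symm⟩
    · rintro ⟨n, rfl⟩; exact ⟨n, rfl⟩
  rw [hset, ← FreeGroup.range_lift_eq_closure] at hΓ
  have hgen : ∀ n, FD.gSL hx n ∈ Γ := by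
    intro n
    rw [hΓ]
    exact ⟨FreeGroup.of n, by simp⟩
  constructor
  · intro γ₁ γ₂ h₁ h₂ hne _
    rw [Set.disjoint_left]
    rintro _ ⟨z, hz, rfl⟩ ⟨z', hz', he⟩
    obtain ⟨w, rfl, hw⟩ := (hmemD z).1 hz
    obtain ⟨w', rfl, hw'⟩ := (hmemD z').1 hz'
    rw [FD.moebius_coe, FD.moebius_coe, UpperHalfPlane.coe_inj] at he
    have hm : γ₂⁻¹ * γ₁ ∈ Γ := Γ.mul_mem (Γ.inv_mem h₂) h₁
    rw [hΓ] at hm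
    obtain ⟨v, hv⟩ := hm
    have e : (γ₂⁻¹ * γ₁) • w = w' := by rw [mul_smul, ← he, inv_smul_smul]
    have hv1 := FD.free_part hx w hw v (by rw [hv, e]; exact hw')
    rw [hv1, map_one] at hv
    apply hne
    have : γ₁ = γ₂ := (inv_mul_eq_one.1 hv.symm).symm
    rw [this]
  · have hcount : Countable Γ := by
      have : Countable (FreeGroup ℕ) := by
        unfold FreeGroup; infer_instance
      rw [hΓ]
      exact (Set.countable_range (FreeGroup.lift (FD.gSL hx))).to_subtype
    have hac : μ ≪ volume := by
      rw [hμ]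
      exact (withDensity_absolutelyContinuous _ _).trans Measure.absolutelyContinuous_restrict
    apply hac
    have hnull : ∀ (γ : Matrix.SpecialLinearGroup (Fin 2) ℝ) (j : ℕ × Bool),
        volume (moebius (γ : Matrix (Fin 2) (Fin 2) ℝ) ''
          ({z : ℂ | 0 < z.im} ∩ Metric.sphere (FD.cen x j : ℂ) (FD.rad x j))) = 0 := by
      intro γ j
      apply addHaar_image_eq_zero_of_differentiableOn_of_addHaar_eq_zero
      · exact (FD.moebius_diff γ).mono Set.inter_subset_left
      · exact measure_mono_null Set.inter_subset_right (Measure.addHaar_sphere _ _ _)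
    refine measure_mono_null (t := ⋃ γ : Γ, ⋃ j : ℕ × Bool,
        (moebius ((γ : Matrix.SpecialLinearGroup (Fin 2) ℝ) : Matrix (Fin 2) (Fin 2) ℝ) ''
          ({z : ℂ | 0 < z.im} ∩ Metric.sphere (FD.cen x j : ℂ) (FD.rad x j)))) ?_
        (measure_iUnion_null fun γ => measure_iUnion_null fun j => hnull γ j)
    rintro z ⟨hz, hzn⟩
    obtain ⟨γ, hγ, h⟩ := FD.cover hx hgen ⟨z, hz⟩
    set w : UpperHalfPlane := ⟨z, hz⟩ with hw
    have hzw : moebius ((γ⁻¹ : Matrix.SpecialLinearGroup (Fin 2) ℝ) : Matrix (Fin 2) (Fin 2) ℝ)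
        ((γ • w : UpperHalfPlane) : ℂ) = z := by
      rw [FD.moebius_coe, inv_smul_smul]
    have hex : ∃ j, FD.dd x j (γ • w) = FD.rad x j := by
      by_contra! hc
      apply hzn
      simp only [Set.mem_iUnion]
      refine ⟨γ⁻¹, Γ.inv_mem hγ, _, (hmemD _).2 ⟨γ • w, rfl, fun j => ?_⟩, hzw⟩
      exact lt_of_le_of_ne (h j) (hc j).symm
    obtain ⟨j, hj⟩ := hex
    simp only [Set.mem_iUnion]
    refine ⟨⟨γ⁻¹, Γ.inv_mem hγ⟩, j, _, ⟨(γ • w).im_pos, ?_⟩, hzw⟩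
    rw [mem_sphere_iff_norm]
    exact hj
end
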